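/- arXiv:2405.16898 — 8 statements merged into one kernel-verified Lean document; each statement's English description precedes it below -/
import Mathlib

section
/- Let s1, s3 > 0 and s2 ∈ (0,1). At every point p = (x, y, θ, φ, ψ) ∈ ℝ^5, the three covectors Υ¹(p), Υ²(p), Υ³(p) are linearly independent; consequently their common kernel ker Υ¹(p) ∩ ker Υ²(p) ∩ ker Υ³(p) ⊂ ℝ^5 is 2-dimensional at every point. -/
/-!
The map `(Υ¹, Υ², Υ³) : ℝ⁵ → ℝ³` is onto at every point: `Υ²` takes the value `1` on
`sin θ ∂x − cos θ ∂y`, while `∂φ` is seen only by `Υ¹` (with coefficient `s₁ ≠ 0`) and `∂ψ`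
only by `Υ³` (with coefficient `−s₃ ≠ 0`). Surjectivity gives the independence of the three
covectors, and by rank-nullity a kernel of dimension `5 − 3 = 2`.
-/

open Real

/-- `Υ¹ = sin(φ+θ)dx − cos(φ+θ)dy − (s₂cos φ − s₁)dθ + s₁dφ` at `p = (x,y,θ,φ,ψ)`. -/
noncomputable def snakeUps1 (s1 s2 : ℝ) (p : Fin 5 → ℝ) : (Fin 5 → ℝ) →ₗ[ℝ] ℝ :=
  Real.sin (p 3 + p 2) • LinearMap.proj 0 - Real.cos (p 3 + p 2) • LinearMap.proj 1
    - (s2 * Real.cos (p 3) - s1) • LinearMap.proj 2 + s1 • LinearMap.proj 3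

/-- `Υ² = sin θ dx − cos θ dy`. -/
noncomputable def snakeUps2 (p : Fin 5 → ℝ) : (Fin 5 → ℝ) →ₗ[ℝ] ℝ :=
  Real.sin (p 2) • LinearMap.proj 0 - Real.cos (p 2) • LinearMap.proj 1

/-- `Υ³ = sin(ψ+θ)dx − cos(ψ+θ)dy − ((1−s₂)cos ψ − s₃)dθ − s₃dψ`. -/
noncomputable def snakeUps3 (s2 s3 : ℝ) (p : Fin 5 → ℝ) : (Fin 5 → ℝ) →ₗ[ℝ] ℝ :=
  Real.sin (p 4 + p 2) • LinearMap.proj 0 - Real.cos (p 4 + p 2) • LinearMap.proj 1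
    - ((1 - s2) * Real.cos (p 4) - s3) • LinearMap.proj 2 - s3 • LinearMap.proj 4

/-- `ξ₁ = cos θ ∂x + sin θ ∂y + ((s₁²−s₂²)/s₁³) sin φ ∂φ + (((1−s₂)²−s₃²)/s₃³) sin ψ ∂ψ`. -/
noncomputable def snakeXi1 (s1 s2 s3 : ℝ) (p : Fin 5 → ℝ) : Fin 5 → ℝ :=
  ![Real.cos (p 2), Real.sin (p 2), 0,
    (s1 ^ 2 - s2 ^ 2) / s1 ^ 3 * Real.sin (p 3),
    ((1 - s2) ^ 2 - s3 ^ 2) / s3 ^ 3 * Real.sin (p 4)]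

/-- `ξ₂ = −(1/s₁²)(1 − (s₂/s₁)cos φ)∂φ − (1/s₃²)(1 − ((1−s₂)/s₃)cos ψ)∂ψ`. -/
noncomputable def snakeXi2 (s1 s2 s3 : ℝ) (p : Fin 5 → ℝ) : Fin 5 → ℝ :=
  ![0, 0, 0, -(1 / s1 ^ 2 * (1 - s2 / s1 * Real.cos (p 3))),
    -(1 / s3 ^ 2 * (1 - (1 - s2) / s3 * Real.cos (p 4)))]

/-- `ξ₃ = sin θ ∂x − cos θ ∂y − (1/s₁)((s₂/s₁) − cos φ)∂φ + (1/s₃)(((1−s₂)/s₃) − cos ψ)∂ψ`. -/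
noncomputable def snakeXi3 (s1 s2 s3 : ℝ) (p : Fin 5 → ℝ) : Fin 5 → ℝ :=
  ![Real.sin (p 2), -Real.cos (p 2), 0,
    -(1 / s1 * (s2 / s1 - Real.cos (p 3))),
    1 / s3 * ((1 - s2) / s3 - Real.cos (p 4))]

/-- `ξ₄ = ∂θ − (1 − (s₂/s₁)cos φ)∂φ − (1 − ((1−s₂)/s₃)cos ψ)∂ψ`. -/
noncomputable def snakeXi4 (s1 s2 s3 : ℝ) (p : Fin 5 → ℝ) : Fin 5 → ℝ :=
  ![0, 0, 1, -(1 - s2 / s1 * Real.cos (p 3)), -(1 - (1 - s2) / s3 * Real.cos (p 4))]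

/-- `ξ₅ = cos θ ∂x + sin θ ∂y + (1/s₁)sin φ ∂φ − (1/s₃)sin ψ ∂ψ`. -/
noncomputable def snakeXi5 (s1 s3 : ℝ) (p : Fin 5 → ℝ) : Fin 5 → ℝ :=
  ![Real.cos (p 2), Real.sin (p 2), 0, 1 / s1 * Real.sin (p 3), -(1 / s3 * Real.sin (p 4))]

/-- The combined map `v ↦ (Υ¹(v), Υ²(v), Υ³(v))`, whose kernel is the common kernel. -/
noncomputable def snakeUps (s1 s2 s3 : ℝ) (p : Fin 5 → ℝ) : (Fin 5 → ℝ) →ₗ[ℝ] (Fin 3 → ℝ) :=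
  LinearMap.pi ![snakeUps1 s1 s2 p, snakeUps2 p, snakeUps3 s2 s3 p]

/-- To hit `(a, b, c)`, move by `b` along `sin θ ∂x − cos θ ∂y` to get `Υ² = b`, then correct
`Υ¹` along `∂φ` and `Υ³` along `∂ψ`; neither correction affects the other two forms. -/
lemma snakeUps_surjective (s1 s2 s3 : ℝ) (hs1 : s1 ≠ 0) (hs3 : s3 ≠ 0) (p : Fin 5 → ℝ) :
    Function.Surjective (snakeUps s1 s2 s3 p) := by
  intro w
  refine ⟨![w 1 * sin (p 2), -(w 1 * cos (p 2)), 0,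
    (w 0 - w 1 * (sin (p 3 + p 2) * sin (p 2) + cos (p 3 + p 2) * cos (p 2))) / s1,
    (w 1 * (sin (p 4 + p 2) * sin (p 2) + cos (p 4 + p 2) * cos (p 2)) - w 2) / s3], ?_⟩
  ext i
  fin_cases i
  · simp [snakeUps, snakeUps1]
    field_simp
    ring
  · simp [snakeUps, snakeUps2]
    linear_combination w 1 * sin_sq_add_cos_sq (p 2)
  · simp [snakeUps, snakeUps3]
    field_simp
    ring

/-- At every point of `ℝ⁵` the covectors `Υ¹(p), Υ²(p), Υ³(p)` are linearly
independent, so their common kernel is 2-dimensional. -/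
theorem snake_pfaffian_rank_three (s1 s2 s3 : ℝ) (hs1 : 0 < s1) (hs3 : 0 < s3)
    (hs2 : s2 ∈ Set.Ioo (0 : ℝ) 1) (p : Fin 5 → ℝ) :
    LinearIndependent ℝ ![snakeUps1 s1 s2 p, snakeUps2 p, snakeUps3 s2 s3 p] ∧
    Module.finrank ℝ
      (LinearMap.ker (snakeUps1 s1 s2 p) ⊓ LinearMap.ker (snakeUps2 p)
        ⊓ LinearMap.ker (snakeUps3 s2 s3 p) : Submodule ℝ (Fin 5 → ℝ)) = 2 := by
  have hsurj := snakeUps_surjective s1 s2 s3 hs1.ne' hs3.ne' p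
  constructor
  · rw [Fintype.linearIndependent_iff]
    intro g hg i
    -- Evaluate the vanishing combination at a preimage of the `i`-th basis vector.
    obtain ⟨v, hv⟩ := hsurj (Pi.single i 1)
    have hcomb := LinearMap.congr_fun hg v
    have hval : ∀ j, (![snakeUps1 s1 s2 p, snakeUps2 p, snakeUps3 s2 s3 p] j) v
        = (Pi.single i 1 : Fin 3 → ℝ) j := fun j => congrFun hv j
    simpa [LinearMap.sum_apply, LinearMap.smul_apply, hval, Pi.single_apply] using hcomb
  · have hker : LinearMap.ker (snakeUps1 s1 s2 p) ⊓ LinearMap.ker (snakeUps2 p)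
        ⊓ LinearMap.ker (snakeUps3 s2 s3 p) = LinearMap.ker (snakeUps s1 s2 s3 p) := by
      ext v
      simp [snakeUps, funext_iff, Fin.forall_fin_succ, and_assoc]
    have hdim := LinearMap.finrank_range_add_finrank_ker (snakeUps s1 s2 s3 p)
    rw [LinearMap.range_eq_top.mpr hsurj, finrank_top, Module.finrank_fin_fun,
      Module.finrank_fin_fun] at hdim
    rw [hker]
    omega
end

section
/- Let s1, s3 > 0 and s2 ∈ (0,1). The Lie bracket of the vector fields ξ5 and ξ4 on ℝ^5 equals the vector field ξ3; that is, at every point p ∈ ℝ^5, Dξ4(p)(ξ5(p)) − Dξ5(p)(ξ4(p)) = ξ3(p), where ξ3 = sin θ·∂x − cos θ·∂y − (1/s1)((s2/s1) − cos φ)∂φ + (1/s3)(((1−s2)/s3) − cos ψ)∂ψ. -/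
/-!
Both vector fields have coordinates depending on a single angle each, so their directional
derivatives are explicit (`fderiv_snakeXi4_apply`, `fderiv_snakeXi5_apply`). Evaluating them on
`ξ₅(p)` and `ξ₄(p)` and subtracting gives `ξ₃(p)` coordinate by coordinate, using
`sin² + cos² = 1` in the `φ` and `ψ` coordinates.
-/

open Real

/-- The directional derivative `Dξ₄(p)(v)`, computed coordinatewise. -/
lemma fderiv_snakeXi4_apply (s1 s2 s3 : ℝ) (p v : Fin 5 → ℝ) :
    fderiv ℝ (snakeXi4 s1 s2 s3) p v =
      ![0, 0, 0, -(s2 / s1 * Real.sin (p 3) * v 3),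
        -((1 - s2) / s3 * Real.sin (p 4) * v 4)] := by
  have hcoord (i : Fin 5) : HasFDerivAt (fun q : Fin 5 → ℝ => q i)
      (ContinuousLinearMap.proj (R := ℝ) (φ := fun _ : Fin 5 => ℝ) i) p := hasFDerivAt_apply i p
  have hd : DifferentiableAt ℝ (snakeXi4 s1 s2 s3) p := by
    rw [differentiableAt_pi]
    intro i
    fin_cases i <;> simp [snakeXi4] <;> fun_prop
  ext i
  refine (congrArg (fun L => L v) (fderiv_apply hd i)).symm.trans ?_
  fin_cases i
  · simp [snakeXi4]
  · simp [snakeXi4]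
  · simp [snakeXi4]
  · have h := (((hcoord 3).cos.const_mul (s2 / s1)).const_sub 1).neg
    refine (congrArg (fun L => L v) h.fderiv).trans ?_
    simp
    ring
  · have h := (((hcoord 4).cos.const_mul ((1 - s2) / s3)).const_sub 1).neg
    refine (congrArg (fun L => L v) h.fderiv).trans ?_
    simp
    ring

/-- The directional derivative `Dξ₅(p)(v)`, computed coordinatewise. -/
lemma fderiv_snakeXi5_apply (s1 s3 : ℝ) (p v : Fin 5 → ℝ) :
    fderiv ℝ (snakeXi5 s1 s3) p v =
      ![-(Real.sin (p 2) * v 2), Real.cos (p 2) * v 2, 0, 1 / s1 * (Real.cos (p 3) * v 3),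
        -(1 / s3 * (Real.cos (p 4) * v 4))] := by
  have hcoord (i : Fin 5) : HasFDerivAt (fun q : Fin 5 → ℝ => q i)
      (ContinuousLinearMap.proj (R := ℝ) (φ := fun _ : Fin 5 => ℝ) i) p := hasFDerivAt_apply i p
  have hd : DifferentiableAt ℝ (snakeXi5 s1 s3) p := by
    rw [differentiableAt_pi]
    intro i
    fin_cases i <;> simp [snakeXi5] <;> fun_prop
  ext i
  refine (congrArg (fun L => L v) (fderiv_apply hd i)).symm.trans ?_
  fin_cases i
  · refine (congrArg (fun L => L v) (hcoord 2).cos.fderiv).trans ?_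
    simp
  · refine (congrArg (fun L => L v) (hcoord 2).sin.fderiv).trans ?_
    simp
  · simp [snakeXi5]
  · refine (congrArg (fun L => L v) ((hcoord 3).sin.const_mul (1 / s1)).fderiv).trans ?_
    simp
  · refine (congrArg (fun L => L v) ((hcoord 4).sin.const_mul (1 / s3)).neg.fderiv).trans ?_
    simp

/-- The Lie bracket `[ξ₅, ξ₄] = Dξ₄(ξ₅) − Dξ₅(ξ₄)` equals `ξ₃`. -/
theorem snake_bracket_xi5_xi4 (s1 s2 s3 : ℝ) (hs1 : 0 < s1) (hs3 : 0 < s3)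
    (hs2 : s2 ∈ Set.Ioo (0 : ℝ) 1) (p : Fin 5 → ℝ) :
    fderiv ℝ (snakeXi4 s1 s2 s3) p (snakeXi5 s1 s3 p)
      - fderiv ℝ (snakeXi5 s1 s3) p (snakeXi4 s1 s2 s3 p) = snakeXi3 s1 s2 s3 p := by
  rw [fderiv_snakeXi4_apply, fderiv_snakeXi5_apply]
  -- In the `φ` and `ψ` coordinates the quadratic terms combine by `sin² + cos² = 1`.
  ext i
  fin_cases i
  · simp [snakeXi3, snakeXi4]
  · simp [snakeXi3, snakeXi4]
  · simp [snakeXi3]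
  · simp [snakeXi3, snakeXi4, snakeXi5]
    linear_combination (-(s2 / s1) * s1⁻¹) * Real.sin_sq_add_cos_sq (p 3)
  · simp [snakeXi3, snakeXi4, snakeXi5]
    linear_combination ((1 - s2) / s3 * s3⁻¹) * Real.sin_sq_add_cos_sq (p 4)
end

section
/- Let s1, s3 > 0 and s2 ∈ (0,1). The Lie bracket of the vector fields ξ5 and ξ3 on ℝ^5 equals the vector field ξ2; that is, at every point p ∈ ℝ^5, Dξ3(p)(ξ5(p)) − Dξ5(p)(ξ3(p)) = ξ2(p), where ξ2 = −(1/s1²)(1 − (s2/s1)cos φ)∂φ − (1/s3²)(1 − ((1−s2)/s3)cos ψ)∂ψ. -/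
/-!
Both fields have vanishing `∂θ` component, and each remaining component depends on a single angle.
Hence the `∂x` and `∂y` components of the bracket vanish, and the `∂φ` and `∂ψ` components are
one-variable brackets `f g' - g f'`, which reduce to those of `ξ₂` by `sin² + cos² = 1`. The
directional derivatives are computed in `fderiv_snakeXi3_apply` and `fderiv_snakeXi5_apply`.
-/

open Real

/-- Directional derivative of `ξ₃`: its components depend on `θ`, `φ`, `ψ` separately. -/
lemma fderiv_snakeXi3_apply (s1 s2 s3 : ℝ) (p v : Fin 5 → ℝ) :
    fderiv ℝ (snakeXi3 s1 s2 s3) p v =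
      ![Real.cos (p 2) * v 2, Real.sin (p 2) * v 2, 0,
        -(1 / s1 * (Real.sin (p 3) * v 3)), 1 / s3 * (Real.sin (p 4) * v 4)] := by
  let d : Fin 5 → ((Fin 5 → ℝ) →L[ℝ] ℝ) := fun i => ContinuousLinearMap.proj i
  have hp : ∀ i : Fin 5, HasFDerivAt (fun q : Fin 5 → ℝ => q i) (d i) p :=
    fun i => hasFDerivAt_apply i p
  have h : HasFDerivAt (snakeXi3 s1 s2 s3) (ContinuousLinearMap.pi
      ![Real.cos (p 2) • d 2,
        -(-Real.sin (p 2) • d 2), 0,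
        -((1 / s1) • -(-Real.sin (p 3) • d 3)),
        (1 / s3) • -(-Real.sin (p 4) • d 4)]) p := by
    rw [hasFDerivAt_pi']
    intro i
    fin_cases i
    · exact (hp 2).sin
    · exact (hp 2).cos.neg
    · exact hasFDerivAt_const (0 : ℝ) p
    · exact (((hp 3).cos.const_sub _).const_mul _).neg
    · exact ((hp 4).cos.const_sub _).const_mul _
  rw [h.fderiv]
  ext i
  fin_cases i <;> simp [d]

/-- The Lie bracket `[ξ₅, ξ₃] = Dξ₃(ξ₅) − Dξ₅(ξ₃)` equals `ξ₂`. -/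
theorem snake_bracket_xi5_xi3 (s1 s2 s3 : ℝ) (hs1 : 0 < s1) (hs3 : 0 < s3)
    (hs2 : s2 ∈ Set.Ioo (0 : ℝ) 1) (p : Fin 5 → ℝ) :
    fderiv ℝ (snakeXi3 s1 s2 s3) p (snakeXi5 s1 s3 p)
      - fderiv ℝ (snakeXi5 s1 s3) p (snakeXi3 s1 s2 s3 p) = snakeXi2 s1 s2 s3 p := by
  rw [fderiv_snakeXi3_apply, fderiv_snakeXi5_apply]
  ext i
  fin_cases i
  · simp [snakeXi2, snakeXi3, snakeXi5]
  · simp [snakeXi2, snakeXi3, snakeXi5]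
  · simp [snakeXi2]
  · simp [snakeXi2, snakeXi3, snakeXi5]
    linear_combination (-(s1⁻¹ ^ 2)) * Real.sin_sq_add_cos_sq (p 3)
  · simp [snakeXi2, snakeXi3, snakeXi5]
    linear_combination (-(s3⁻¹ ^ 2)) * Real.sin_sq_add_cos_sq (p 4)
end

section
/- Let s1, s3 > 0 and s2 ∈ (0,1). The Lie bracket of the vector fields ξ4 and ξ3 on ℝ^5 equals the vector field ξ1; that is, at every point p ∈ ℝ^5, Dξ3(p)(ξ4(p)) − Dξ4(p)(ξ3(p)) = ξ1(p), where ξ1 = cos θ·∂x + sin θ·∂y + ((s1²−s2²)/s1³)sin φ·∂φ + (((1−s2)²−s3²)/s3³)sin ψ·∂ψ. -/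
/-!
Each component of `ξ₃` and `ξ₄` is a function of a single coordinate (the `x`, `y` components depend
on `θ`, the `φ` component on `φ`, the `ψ` component on `ψ`), so both Jacobians have at most one
nonzero entry per row (`fderiv_apply_of_comp_coord`). The bracket is then computed row by row; in
the `φ` row, for instance, with `c = s₂/s₁`,
`(1/s₁) sin φ (1 - c cos φ) - (c/s₁) sin φ (c - cos φ) = (1 - c²)/s₁ · sin φ`.
-/


open Real

/-- If the `i`-th component of `F` is `g` of the `j`-th coordinate, then the `i`-th row of its
Jacobian is `g'` in column `j` and zero elsewhere. -/
lemma fderiv_apply_of_comp_coord {F : (Fin 5 → ℝ) → Fin 5 → ℝ} {p : Fin 5 → ℝ}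
    (hF : DifferentiableAt ℝ F p) (v : Fin 5 → ℝ) (i j : Fin 5) {g : ℝ → ℝ} {g' : ℝ}
    (hFg : ∀ q, F q i = g (q j)) (hg : HasDerivAt g g' (p j)) :
    fderiv ℝ F p v i = g' * v j := by
  have h1 : HasFDerivAt (fun q => F q i)
      ((ContinuousLinearMap.proj (R := ℝ) (φ := fun _ : Fin 5 => ℝ) i).comp (fderiv ℝ F p)) p :=
    (hasFDerivAt_pi'.1 hF.hasFDerivAt) i
  have h2 : HasFDerivAt (fun q : Fin 5 → ℝ => g (q j))
      (g' • ContinuousLinearMap.proj (R := ℝ) (φ := fun _ : Fin 5 => ℝ) j) p :=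
    hg.comp_hasFDerivAt p (hasFDerivAt_apply j p)
  rw [funext hFg] at h1
  simpa using congrArg (fun L => L v) (h1.unique h2)

lemma differentiable_snakeXi3 (s1 s2 s3 : ℝ) : Differentiable ℝ (snakeXi3 s1 s2 s3) := by
  refine differentiable_pi.2 fun i => ?_
  fin_cases i <;> simp [snakeXi3] <;> fun_prop

lemma differentiable_snakeXi4 (s1 s2 s3 : ℝ) : Differentiable ℝ (snakeXi4 s1 s2 s3) := by
  refine differentiable_pi.2 fun i => ?_
  fin_cases i <;> simp [snakeXi4] <;> fun_prop

lemma fderiv_snakeXi3 (s1 s2 s3 : ℝ) (p v : Fin 5 → ℝ) :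
    fderiv ℝ (snakeXi3 s1 s2 s3) p v =
      ![Real.cos (p 2) * v 2, Real.sin (p 2) * v 2, 0,
        -(1 / s1 * Real.sin (p 3)) * v 3, 1 / s3 * Real.sin (p 4) * v 4] := by
  have row := fun i j g g' => fderiv_apply_of_comp_coord (g := g) (g' := g')
    (differentiable_snakeXi3 s1 s2 s3 p) v i j
  ext i
  fin_cases i
  · exact row 0 2 _ _ (fun _ => rfl) (Real.hasDerivAt_sin _)
  · exact row 1 2 (fun t => -Real.cos t) _ (fun _ => rfl)
      (by simpa using (Real.hasDerivAt_cos (p 2)).fun_neg)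
  · simpa using row 2 2 (fun _ => 0) 0 (fun _ => rfl) (hasDerivAt_const _ _)
  · exact row 3 3 (fun t => -(1 / s1 * (s2 / s1 - Real.cos t))) _ (fun _ => rfl)
      (by simpa using (((Real.hasDerivAt_cos (p 3)).const_sub (s2 / s1)).const_mul (1 / s1)).fun_neg)
  · exact row 4 4 (fun t => 1 / s3 * ((1 - s2) / s3 - Real.cos t)) _ (fun _ => rfl)
      (by simpa using ((Real.hasDerivAt_cos (p 4)).const_sub ((1 - s2) / s3)).const_mul (1 / s3))

lemma fderiv_snakeXi4 (s1 s2 s3 : ℝ) (p v : Fin 5 → ℝ) :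
    fderiv ℝ (snakeXi4 s1 s2 s3) p v =
      ![0, 0, 0, -(s2 / s1 * Real.sin (p 3)) * v 3, -((1 - s2) / s3 * Real.sin (p 4)) * v 4] := by
  have row := fun i j g g' => fderiv_apply_of_comp_coord (g := g) (g' := g')
    (differentiable_snakeXi4 s1 s2 s3 p) v i j
  ext i
  fin_cases i
  · simpa using row 0 2 (fun _ => 0) 0 (fun _ => rfl) (hasDerivAt_const _ _)
  · simpa using row 1 2 (fun _ => 0) 0 (fun _ => rfl) (hasDerivAt_const _ _)
  · simpa using row 2 2 (fun _ => 1) 0 (fun _ => rfl) (hasDerivAt_const _ _)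
  · exact row 3 3 (fun t => -(1 - s2 / s1 * Real.cos t)) _ (fun _ => rfl)
      (by simpa using (Real.hasDerivAt_cos (p 3)).const_mul (s2 / s1))
  · exact row 4 4 (fun t => -(1 - (1 - s2) / s3 * Real.cos t)) _ (fun _ => rfl)
      (by simpa using (Real.hasDerivAt_cos (p 4)).const_mul ((1 - s2) / s3))

/-- The Lie bracket `[ξ₄, ξ₃] = Dξ₃(ξ₄) − Dξ₄(ξ₃)` equals `ξ₁`. -/
theorem snake_bracket_xi4_xi3 (s1 s2 s3 : ℝ) (hs1 : 0 < s1) (hs3 : 0 < s3)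
    (hs2 : s2 ∈ Set.Ioo (0 : ℝ) 1) (p : Fin 5 → ℝ) :
    fderiv ℝ (snakeXi3 s1 s2 s3) p (snakeXi4 s1 s2 s3 p)
      - fderiv ℝ (snakeXi4 s1 s2 s3) p (snakeXi3 s1 s2 s3 p) = snakeXi1 s1 s2 s3 p := by
  have h1 : s1 ≠ 0 := hs1.ne'
  have h3 : s3 ≠ 0 := hs3.ne'
  rw [fderiv_snakeXi3, fderiv_snakeXi4]
  ext i
  fin_cases i <;> simp [snakeXi1, snakeXi3, snakeXi4] <;> field_simp <;> ring
end

section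
/- Let s1, s3 > 0 and s2 ∈ (0,1). At every point p = (x, y, θ, φ, ψ) ∈ ℝ^5, the three vectors ξ3(p), ξ4(p), ξ5(p) are linearly independent; in particular ξ3(p) does not lie in the span of ξ4(p) and ξ5(p), so the bracket [ξ5, ξ4] = ξ3 takes the rank-2 distribution spanned by ξ4, ξ5 to a rank-3 distribution. -/
/-!
The projections of `ξ₃` and `ξ₅` to the `(x, y)`-plane are the orthonormal vectors
`(sin θ, -cos θ)` and `(cos θ, sin θ)`, and neither vector has a `∂θ`-component, while `ξ₄` projects
to `∂θ` in `(x, y, θ)`-space. So the three vectors are already independent in the coordinates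
`(x, y, θ)`, whatever their `∂φ`- and `∂ψ`-components.
-/

open Real

/-- At every point of `ℝ⁵`, the vectors `ξ₃(p), ξ₄(p), ξ₅(p)` are linearly
independent; in particular `ξ₃(p)` is not in the span of `ξ₄(p)` and `ξ₅(p)`. -/
theorem snake_xi3_xi4_xi5_independent (s1 s2 s3 : ℝ) (hs1 : 0 < s1) (hs3 : 0 < s3)
    (hs2 : s2 ∈ Set.Ioo (0 : ℝ) 1) (p : Fin 5 → ℝ) :
    LinearIndependent ℝ ![snakeXi3 s1 s2 s3 p, snakeXi4 s1 s2 s3 p, snakeXi5 s1 s3 p] ∧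
    snakeXi3 s1 s2 s3 p ∉
      Submodule.span ℝ ({snakeXi4 s1 s2 s3 p, snakeXi5 s1 s3 p} : Set (Fin 5 → ℝ)) := by
  have hsc := Real.sin_sq_add_cos_sq (p 2)
  constructor
  · rw [Fintype.linearIndependent_iff]
    intro g hg
    have h0 := congrFun hg 0
    have h1 := congrFun hg 1
    have h2 := congrFun hg 2
    simp [Fin.sum_univ_three, snakeXi3, snakeXi4, snakeXi5] at h0 h1 h2
    -- Pair the relation with `(sin θ, -cos θ)`, respectively `(cos θ, sin θ)`.
    have hg0 : g 0 = 0 := by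
      linear_combination Real.sin (p 2) * h0 - Real.cos (p 2) * h1 - g 0 * hsc
    have hg2 : g 2 = 0 := by
      linear_combination Real.cos (p 2) * h0 + Real.sin (p 2) * h1 - g 2 * hsc
    intro i
    fin_cases i
    · exact hg0
    · exact h2
    · exact hg2
  · intro h
    obtain ⟨a, b, hab⟩ := Submodule.mem_span_pair.1 h
    have h0 := congrFun hab 0
    have h1 := congrFun hab 1
    simp [snakeXi3, snakeXi4, snakeXi5] at h0 h1
    -- Pairing with `(sin θ, -cos θ)` kills `ξ₄` and `ξ₅` and sends `ξ₃` to `1`.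
    have : (1 : ℝ) = 0 := by
      linear_combination -Real.sin (p 2) * h0 + Real.cos (p 2) * h1 - hsc
    exact one_ne_zero this
end

section
/- Let s1, s3 > 0 and s2 ∈ (0,1). At the point p0 = (0, 0, 0, π/2, π/2) ∈ ℝ^5, the five vectors ξ1(p0), ξ2(p0), ξ3(p0), ξ4(p0), ξ5(p0) are linearly independent, i.e., they form a basis of ℝ^5. (Hence the distribution spanned by ξ4, ξ5 is bracket generating with growth vector (2,3,5) at p0.) -/
/-!
At `p₀` the `x`-, `y`- and `θ`-components of a vanishing combination `∑ cᵢ ξᵢ(p₀)` give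
`c₅ = -c₁`, `c₃ = 0` and `c₄ = 0`. What remains lives in the `(φ, ψ)`-plane and involves only
`ξ₁ - ξ₅ = (-s₂²/s₁³, (1-s₂)²/s₃³)` and `ξ₂ = (-1/s₁², -1/s₃²)`. After clearing denominators their
determinant is `s₂² s₃ + (1-s₂)² s₁ > 0`, so `c₁ = c₂ = 0`. Spanning follows by counting dimensions.
In the code the coefficients are indexed from `0`, so `cᵢ` is `c (i - 1)`.
-/

open Real

/-- At the point `p₀ = (0, 0, 0, π/2, π/2)`, the five vectors `ξ₁(p₀), …, ξ₅(p₀)`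
are linearly independent, hence form a basis of `ℝ⁵`. -/
theorem snake_growth_235_at_point (s1 s2 s3 : ℝ) (hs1 : 0 < s1) (hs3 : 0 < s3)
    (hs2 : s2 ∈ Set.Ioo (0 : ℝ) 1) :
    LinearIndependent ℝ
      ![snakeXi1 s1 s2 s3 ![0, 0, 0, π / 2, π / 2],
        snakeXi2 s1 s2 s3 ![0, 0, 0, π / 2, π / 2],
        snakeXi3 s1 s2 s3 ![0, 0, 0, π / 2, π / 2],
        snakeXi4 s1 s2 s3 ![0, 0, 0, π / 2, π / 2],
        snakeXi5 s1 s3 ![0, 0, 0, π / 2, π / 2]] ∧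
    Submodule.span ℝ (Set.range
      ![snakeXi1 s1 s2 s3 ![0, 0, 0, π / 2, π / 2],
        snakeXi2 s1 s2 s3 ![0, 0, 0, π / 2, π / 2],
        snakeXi3 s1 s2 s3 ![0, 0, 0, π / 2, π / 2],
        snakeXi4 s1 s2 s3 ![0, 0, 0, π / 2, π / 2],
        snakeXi5 s1 s3 ![0, 0, 0, π / 2, π / 2]]) = ⊤ := by
  have hli : LinearIndependent ℝ
      ![snakeXi1 s1 s2 s3 ![0, 0, 0, π / 2, π / 2],
        snakeXi2 s1 s2 s3 ![0, 0, 0, π / 2, π / 2],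
        snakeXi3 s1 s2 s3 ![0, 0, 0, π / 2, π / 2],
        snakeXi4 s1 s2 s3 ![0, 0, 0, π / 2, π / 2],
        snakeXi5 s1 s3 ![0, 0, 0, π / 2, π / 2]] := by
    rw [Fintype.linearIndependent_iff]
    intro c hc
    have e0 := congrFun hc 0
    have e1 := congrFun hc 1
    have e2 := congrFun hc 2
    have e3 := congrFun hc 3
    have e4 := congrFun hc 4
    simp [Fin.sum_univ_five, snakeXi1, snakeXi2, snakeXi3, snakeXi4, snakeXi5]
      at e0 e1 e2 e3 e4
    have h4 : c 4 = -c 0 := by linarith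
    rw [e1, e2, h4] at e3 e4
    have hφ : c 0 * s2 ^ 2 + c 1 * s1 = 0 := by
      field_simp at e3
      linarith
    have hψ : c 0 * (1 - s2) ^ 2 - c 1 * s3 = 0 := by
      field_simp at e4
      linarith
    have hdet : 0 < s2 ^ 2 * s3 + (1 - s2) ^ 2 * s1 := by
      have := hs2.1
      positivity
    have h0 : c 0 = 0 := by
      have h : c 0 * (s2 ^ 2 * s3 + (1 - s2) ^ 2 * s1) = 0 := by
        linear_combination s3 * hφ + s1 * hψ
      exact (mul_eq_zero.mp h).resolve_right hdet.ne'
    have h1 : c 1 = 0 := by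
      rw [h0] at hφ
      simpa [hs1.ne'] using hφ
    intro i
    fin_cases i <;> simp [h0, h1, e1, e2, h4]
  exact ⟨hli, hli.span_eq_top_of_card_eq_finrank (by simp)⟩
end

section
/- The set H of complex 5×5 matrices of the form with rows (g1·ḡ1², 0, 0, 0, 0), (0, g1²·ḡ1, 0, 0, 0), (ḡ3, g3, g1·ḡ1, 0, 0), (ḡ5, g4, ḡ2, ḡ1, 0), (ḡ4, g5, g2, 0, g1), where g1, g2, g3, g4, g5 ∈ ℂ and g1 ≠ 0, is a subgroup of GL(5, ℂ): every such matrix is invertible, the identity matrix belongs to H, the product of any two matrices in H belongs to H, and the inverse of any matrix in H belongs to H. -/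
/-!
The entries of a product of two matrices of the given form can be read off directly: the product
has the same form, with parameters polynomial in those of the factors and their conjugates
(`Hmat_mul`). The product law is triangular in the parameters, so for `g1 ≠ 0` the equation
`Hmat g * Hmat h = 1` can be solved successively for `h1`, `h2`, `h3`, and then `h4`, `h5`
(`Hmat_right_inverse`). A right inverse of a square matrix over a field is its inverse, so this
gives both invertibility and closure under inversion.
-/

open Matrix

/-- The matrix of the structure group `H` of the Cartan equivalence problem for
`(2,3,5)` CR structures, where `star` is complex conjugation. -/
def Hmat (g1 g2 g3 g4 g5 : ℂ) : Matrix (Fin 5) (Fin 5) ℂ :=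
  !![g1 * (star g1) ^ 2, 0, 0, 0, 0;
     0, g1 ^ 2 * star g1, 0, 0, 0;
     star g3, g3, g1 * star g1, 0, 0;
     star g5, g4, star g2, star g1, 0;
     star g4, g5, g2, 0, g1]

/-- The set `H ⊆ Matrix (Fin 5) (Fin 5) ℂ`. -/
def Hset : Set (Matrix (Fin 5) (Fin 5) ℂ) :=
  {A | ∃ g1 g2 g3 g4 g5 : ℂ, g1 ≠ 0 ∧ A = Hmat g1 g2 g3 g4 g5}

/-- The product law of `H` in terms of the parameters. -/
lemma Hmat_mul (g1 g2 g3 g4 g5 h1 h2 h3 h4 h5 : ℂ) :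
    Hmat g1 g2 g3 g4 g5 * Hmat h1 h2 h3 h4 h5 =
      Hmat (g1 * h1)
        (g2 * (h1 * star h1) + g1 * h2)
        (g3 * (h1 ^ 2 * star h1) + g1 * star g1 * h3)
        (g4 * (h1 ^ 2 * star h1) + star g2 * h3 + star g1 * h4)
        (g5 * (h1 ^ 2 * star h1) + g2 * h3 + g1 * h5) := by
  ext i j
  fin_cases i <;> fin_cases j <;>
    simp [Hmat, Matrix.mul_apply, Fin.sum_univ_five, -mul_eq_mul_right_iff,
      -mul_eq_mul_left_iff] <;> ring

lemma Hmat_one : Hmat 1 0 0 0 0 = 1 := by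
  ext i j
  fin_cases i <;> fin_cases j <;> simp [Hmat]

lemma Hmat_right_inverse (g1 g2 g3 g4 g5 : ℂ) (hg : g1 ≠ 0) :
    ∃ B ∈ Hset, Hmat g1 g2 g3 g4 g5 * B = 1 := by
  have hs : star g1 ≠ 0 := star_ne_zero.mpr hg
  -- `c` is the factor `h1 ^ 2 * star h1` of the product law, at `h1 = g1⁻¹`.
  let c : ℂ := g1⁻¹ ^ 2 * star g1⁻¹
  let h3 : ℂ := -(g3 * c) / (g1 * star g1)
  refine ⟨Hmat g1⁻¹ (-(g2 * (g1⁻¹ * star g1⁻¹)) / g1) h3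
    (-(g4 * c + star g2 * h3) / star g1) (-(g5 * c + g2 * h3) / g1),
    ⟨_, _, _, _, _, inv_ne_zero hg, rfl⟩, ?_⟩
  rw [Hmat_mul, ← Hmat_one]
  congr 1
  · exact mul_inv_cancel₀ hg
  · rw [mul_div_cancel₀ _ hg, add_neg_cancel]
  · rw [mul_div_cancel₀ _ (mul_ne_zero hg hs), add_neg_cancel]
  · rw [mul_div_cancel₀ _ hs, add_neg_cancel]
  · rw [mul_div_cancel₀ _ hg, add_neg_cancel]

/-- `H` is a subgroup of `GL(5, ℂ)`: its members are invertible, it contains the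
identity, and it is closed under products and inverses. -/
theorem Hset_is_subgroup :
    (∀ A ∈ Hset, IsUnit A) ∧
    (1 : Matrix (Fin 5) (Fin 5) ℂ) ∈ Hset ∧
    (∀ A ∈ Hset, ∀ B ∈ Hset, A * B ∈ Hset) ∧
    (∀ A ∈ Hset, A⁻¹ ∈ Hset) := by
  refine ⟨?_, ⟨1, 0, 0, 0, 0, one_ne_zero, Hmat_one.symm⟩, ?_, ?_⟩
  · rintro _ ⟨g1, g2, g3, g4, g5, hg, rfl⟩
    obtain ⟨B, -, hAB⟩ := Hmat_right_inverse g1 g2 g3 g4 g5 hg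
    exact IsUnit.of_mul_eq_one B hAB
  · rintro _ ⟨g1, g2, g3, g4, g5, hg, rfl⟩ _ ⟨h1, h2, h3, h4, h5, hh, rfl⟩
    exact ⟨_, _, _, _, _, mul_ne_zero hg hh, Hmat_mul _ _ _ _ _ _ _ _ _ _⟩
  · rintro _ ⟨g1, g2, g3, g4, g5, hg, rfl⟩
    obtain ⟨B, hB, hAB⟩ := Hmat_right_inverse g1 g2 g3 g4 g5 hg
    rwa [Matrix.inv_eq_right_inv hAB]
end

section
/- The set H_J of complex 5×5 matrices of the form with rows (g1·ḡ1², 0, 0, 0, 0), (0, g1²·ḡ1, 0, 0, 0), (0, 0, g1·ḡ1, 0, 0), (0, 0, g2, ḡ1, 0), (0, 0, ḡ2, 0, g1), where g1, g2 ∈ ℂ and g1 ≠ 0, is a subgroup of GL(5, ℂ) contained in the group H; that is, H_J ⊆ H, the identity matrix belongs to H_J, and H_J is closed under matrix multiplication and inversion. -/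
/-! The parameters multiply by the law
`(a1, a2) * (b1, b2) = (a1 b1, a2 b1 b̄1 + ā1 b2)` (`HJmat_mul`), with neutral element `(1, 0)`
(`HJmat_one`). Solving for the second factor, the inverse of `(g1, g2)` is
`(g1⁻¹, -g2 / (g1 ḡ1²))`. An element `(g1, g2)` of `H_J` is the element of `H` with parameters
`(g1, ḡ2, 0, 0, 0)`. -/

open Matrix

/-- The matrix of the reduced structure group `H_J` on the branch `J ≡ 0`. -/
def HJmat (g1 g2 : ℂ) : Matrix (Fin 5) (Fin 5) ℂ :=
  !![g1 * (star g1) ^ 2, 0, 0, 0, 0;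
     0, g1 ^ 2 * star g1, 0, 0, 0;
     0, 0, g1 * star g1, 0, 0;
     0, 0, g2, star g1, 0;
     0, 0, star g2, 0, g1]

/-- The set `H_J ⊆ Matrix (Fin 5) (Fin 5) ℂ`. -/
def HJset : Set (Matrix (Fin 5) (Fin 5) ℂ) :=
  {A | ∃ g1 g2 : ℂ, g1 ≠ 0 ∧ A = HJmat g1 g2}

lemma HJmat_one : HJmat 1 0 = 1 := by
  ext i j
  fin_cases i <;> fin_cases j <;> simp [HJmat]

/-- The group law in parameters. The entry `(4, 2)` of the product, counted from zero, is
the conjugate of the entry `(3, 2)`, so the product again has the shape of `H_J`. -/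
lemma HJmat_mul (a1 a2 b1 b2 : ℂ) :
    HJmat a1 a2 * HJmat b1 b2 = HJmat (a1 * b1) (a2 * (b1 * star b1) + star a1 * b2) := by
  ext i j
  fin_cases i <;> fin_cases j <;>
    simp [HJmat, Matrix.mul_apply, Fin.sum_univ_succ, -mul_eq_mul_left_iff] <;> ring

lemma HJmat_inv {g1 : ℂ} (h : g1 ≠ 0) (g2 : ℂ) :
    (HJmat g1 g2)⁻¹ = HJmat g1⁻¹ (-g2 / (g1 * star g1 ^ 2)) := by
  have hs : star g1 ≠ 0 := star_ne_zero.mpr h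
  apply Matrix.inv_eq_right_inv
  rw [HJmat_mul, ← HJmat_one, mul_inv_cancel₀ h, star_inv₀]
  congr 1
  field_simp
  ring

lemma HJmat_eq_Hmat (g1 g2 : ℂ) : HJmat g1 g2 = Hmat g1 (star g2) 0 0 0 := by
  simp [HJmat, Hmat]

/-- `H_J` is a subgroup of `GL(5, ℂ)` contained in `H`: `H_J ⊆ H`, it contains the
identity, and it is closed under products and inverses. -/
theorem HJset_is_subgroup_of_Hset :
    HJset ⊆ Hset ∧
    (1 : Matrix (Fin 5) (Fin 5) ℂ) ∈ HJset ∧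
    (∀ A ∈ HJset, ∀ B ∈ HJset, A * B ∈ HJset) ∧
    (∀ A ∈ HJset, A⁻¹ ∈ HJset) := by
  refine ⟨?_, ⟨1, 0, one_ne_zero, HJmat_one.symm⟩, ?_, ?_⟩
  · rintro _ ⟨g1, g2, h, rfl⟩
    exact ⟨g1, star g2, 0, 0, 0, h, HJmat_eq_Hmat g1 g2⟩
  · rintro _ ⟨a1, a2, ha, rfl⟩ _ ⟨b1, b2, hb, rfl⟩
    exact ⟨_, _, mul_ne_zero ha hb, HJmat_mul a1 a2 b1 b2⟩
  · rintro _ ⟨g1, g2, h, rfl⟩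
    exact ⟨_, _, inv_ne_zero h, HJmat_inv h g2⟩
end
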